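/- arXiv:2508.05942 — 3 statements merged into one kernel-verified Lean document; each statement's English description precedes it below -/
import Mathlib

section
/- For any integer b ≥ 2, there exist infinitely many positive integers t such that the b-Cullen number t·b^t + 1 is a b-Riesel number. -/
/-- An integer `m` is composite if `m > 1` and `m` is not prime. -/
def IsComposite (m : ℤ) : Prop := 1 < m ∧ ¬ Prime m

/-- `k` is a `b`-Sierpiński number: a positive integer with `gcd (k+1) (b-1) = 1`
such that `k * b ^ n + 1` is composite for all positive integers `n`. -/
def IsBSierpinski (b k : ℤ) : Prop :=
  0 < k ∧ Int.gcd (k + 1) (b - 1) = 1 ∧ ∀ n : ℕ, 0 < n → IsComposite (k * b ^ n + 1)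

/-- `k` is a `b`-Riesel number: a positive integer with `gcd (k-1) (b-1) = 1`
such that `k * b ^ n - 1` is composite for all positive integers `n`. -/
def IsBRiesel (b k : ℤ) : Prop :=
  0 < k ∧ Int.gcd (k - 1) (b - 1) = 1 ∧ ∀ n : ℕ, 0 < n → IsComposite (k * b ^ n - 1)

/-- `k` is a `b`-Brier number: both `b`-Sierpiński and `b`-Riesel. -/
def IsBBrier (b k : ℤ) : Prop := IsBSierpinski b k ∧ IsBRiesel b k

/-!
If `b` has order dividing `m` modulo `p`, `t ≡ -1` modulo `m` and `t ≡ b ^ (s + 1) - b` modulo `p`,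
then `t * b ^ t + 1 ≡ b ^ s` modulo `p`, so `p` divides `(t * b ^ t + 1) * b ^ n - 1` whenever
`n ≡ -s` modulo `m`. If such classes of `n`, for finitely many pairs `(m, p)` with distinct primes
`p`, cover the natural numbers, and no `p` divides `b - 1` or one of the moduli `m`, then the
Chinese remainder theorem provides infinitely many `t` that serve all the pairs at once; requiring
also `t ≡ -1` modulo `b - 1` gives the gcd condition.

For `b ≥ 3` there is a prime `p` modulo which `b` has order exactly `m`, for every `m ≥ 3`
(Zsigmondy), so any covering system with distinct moduli `m ≥ 3` free of prime factors larger
than `3` will do: then `p > m ≥ 3` divides no modulus. There is no prime modulo which `2` has order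
`6`, so for `b = 2` prime factors of the Fermat numbers are used instead.
-/

open Finset Function Polynomial

section Zsigmondy

theorem cyclotomic_dvd_geom_sum_X_pow (R : Type*) [CommRing R] [IsDomain R] {k d : ℕ}
    (hk : 1 < k) (hd : d ≠ 0) :
    cyclotomic (k * d) R ∣ ∑ i ∈ range k, ((X : R[X]) ^ d) ^ i := by
  have hproper : d ∈ (k * d).properDivisors :=
    Nat.mem_properDivisors.2 ⟨dvd_mul_left d k, lt_mul_of_one_lt_left (Nat.pos_of_ne_zero hd) hk⟩
  have hne : (X : R[X]) ^ d - 1 ≠ 0 := X_pow_sub_C_ne_zero (Nat.pos_of_ne_zero hd) 1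
  rw [← mul_dvd_mul_iff_left hne, mul_geom_sum, ← pow_mul']
  exact X_pow_sub_one_mul_cyclotomic_dvd_X_pow_sub_one_of_dvd R hproper

variable {n p : ℕ} {b : ℤ}

theorem exists_eq_pow_mul_orderOf_of_dvd_eval_cyclotomic (hp : p.Prime) (hn : n ≠ 0)
    (h : (p : ℤ) ∣ (cyclotomic n ℤ).eval b) : ∃ k, n = p ^ k * orderOf (b : ZMod p) := by
  have := Fact.mk hp
  obtain ⟨k, m, hpm, rfl⟩ := Nat.exists_eq_pow_mul_and_not_dvd hn p hp.ne_one
  have : NeZero (m : ZMod p) := .of_not_dvd _ hpm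
  have hroot : (cyclotomic (p ^ k * m) (ZMod p)).IsRoot b := by
    rw [IsRoot.def, ← map_cyclotomic_int, eval_intCast_map, eq_intCast]
    exact (ZMod.intCast_zmod_eq_zero_iff_dvd _ p).2 h
  exact ⟨k, by rw [← (isRoot_cyclotomic_prime_pow_mul_iff_of_charP.1 hroot).eq_orderOf]⟩

theorem prime_le_of_dvd_of_dvd_eval_cyclotomic {q : ℕ} (hp : p.Prime) (hq : q.Prime) (hn : n ≠ 0)
    (h : (p : ℤ) ∣ (cyclotomic n ℤ).eval b) (hqn : q ∣ n) : q ≤ p := by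
  have := Fact.mk hp
  obtain ⟨k, hk⟩ := exists_eq_pow_mul_orderOf_of_dvd_eval_cyclotomic hp hn h
  have hb : (b : ZMod p) ≠ 0 := by
    intro hb
    simp [hb, hn] at hk
  rcases hq.dvd_mul.1 (hk ▸ hqn) with hqp | hqord
  · exact Nat.le_of_dvd hp.pos (hq.dvd_of_dvd_pow hqp)
  · exact (Nat.le_of_dvd hp.pred_pos (hqord.trans (ZMod.orderOf_dvd_card_sub_one hb))).trans
      (Nat.sub_le p 1)

theorem sq_not_dvd_eval_cyclotomic (hp : p.Prime) (hpn : p ∣ n) (hn : 2 < n) :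
    ¬ (p : ℤ) ^ 2 ∣ (cyclotomic n ℤ).eval b := by
  intro hsq
  have := Fact.mk hp
  have hpΦ : (p : ℤ) ∣ (cyclotomic n ℤ).eval b := (dvd_pow_self _ two_ne_zero).trans hsq
  obtain ⟨d, rfl⟩ := hpn
  have hd : d ≠ 0 := by rintro rfl; simp at hn
  have hΦ_dvd : (cyclotomic (p * d) ℤ).eval b ∣ ∑ i ∈ range p, (b ^ d) ^ i := by
    simpa [eval_finsetSum] using eval_dvd (x := b) (cyclotomic_dvd_geom_sum_X_pow ℤ hp.one_lt hd)
  rcases hp.eq_two_or_odd' with rfl | hodd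
  · -- `d` is even, so the geometric sum `1 + b ^ d` is `1` plus a square.
    obtain ⟨q, hq, hqd⟩ := Nat.exists_prime_and_dvd (n := d) (by lia)
    have hq2 : q = 2 := le_antisymm
      (prime_le_of_dvd_of_dvd_eval_cyclotomic hp hq (by lia) hpΦ (hqd.mul_left 2)) hq.two_le
    obtain ⟨e, rfl⟩ := hq2 ▸ hqd
    have h4 : (4 : ℤ) ∣ 1 + (b ^ e) ^ 2 := by
      simpa [sum_range_succ, ← pow_mul, mul_comm] using hsq.trans hΦ_dvd
    have one_add_sq_ne_zero : ∀ x : ZMod 4, 1 + x ^ 2 ≠ 0 := by decide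
    rw [← Nat.cast_ofNat, ← ZMod.intCast_zmod_eq_zero_iff_dvd] at h4
    exact one_add_sq_ne_zero (b ^ e) (by exact_mod_cast h4)
  · have hbd : (p : ℤ) ∣ b ^ d - 1 := by
      rw [← ZMod.intCast_zmod_eq_zero_iff_dvd]
      have hroot : (p : ℤ) ∣ b ^ (p * d) - 1 := by
        simpa using hpΦ.trans (eval_dvd (cyclotomic.dvd_X_pow_sub_one (p * d) ℤ))
      rw [← ZMod.intCast_zmod_eq_zero_iff_dvd] at hroot
      simpa [pow_mul', ZMod.pow_card] using hroot
    obtain ⟨c, hc⟩ := hbd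
    have hgeom := odd_sq_dvd_geom_sum₂_sub (a := (1 : ℤ)) (b := c) hodd
    simp only [← hc, add_sub_cancel, one_pow, mul_one] at hgeom
    have hp2 : (p : ℤ) ^ 2 ∣ p := (dvd_sub_right (hsq.trans hΦ_dvd)).1 hgeom
    have := Nat.le_of_dvd hp.pos (by exact_mod_cast hp2)
    nlinarith [hp.two_le]

theorem exists_prime_orderOf_eq {b : ℕ} (hb : 2 < b) (hn : 2 < n) :
    ∃ p : ℕ, p.Prime ∧ orderOf (b : ZMod p) = n := by
  by_contra! hnone
  set Φ : ℕ := ((cyclotomic n ℤ).eval (b : ℤ)).natAbs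
  have hdvd_n {p : ℕ} (hp : p.Prime) (h : p ∣ Φ) : p ∣ n := by
    obtain ⟨k, hk⟩ := exists_eq_pow_mul_orderOf_of_dvd_eval_cyclotomic hp (by lia)
      (Int.natCast_dvd.2 h)
    have hk0 : k ≠ 0 := by
      rintro rfl
      exact hnone p hp (by simpa using hk.symm)
    exact hk ▸ (dvd_pow_self p hk0).mul_right _
  have hΦ_gt : 2 ^ n.totient < Φ :=
    (Nat.pow_le_pow_left (by lia) _).trans_lt
      (sub_one_pow_totient_lt_natAbs_cyclotomic_eval (q := b) (by lia) (by lia))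
  obtain ⟨p, hp, k, hk⟩ := Nat.exists_prime_and_dvd (n := Φ)
    (Nat.one_le_two_pow.trans_lt hΦ_gt).ne'
  have hpΦ : p ∣ Φ := ⟨k, hk⟩
  have hp_lt : p < Φ := calc
    p ≤ 2 ^ (p - 1) := Nat.le_of_pred_lt Nat.lt_two_pow_self
    _ ≤ 2 ^ n.totient := by
      refine Nat.pow_le_pow_right two_pos (Nat.totient_prime hp ▸ ?_)
      exact Nat.le_of_dvd (Nat.totient_pos.2 (by lia)) (Nat.totient_dvd_of_dvd (hdvd_n hp hpΦ))
    _ < Φ := hΦ_gt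
  obtain ⟨q, hq, hqk⟩ := Nat.exists_prime_and_dvd (n := k) (by rintro rfl; lia)
  have hqΦ : q ∣ Φ := hk ▸ hqk.mul_left p
  have hle {p q : ℕ} (hp : p.Prime) (hq : q.Prime) (hpΦ : p ∣ Φ) (hqΦ : q ∣ Φ) : q ≤ p :=
    prime_le_of_dvd_of_dvd_eval_cyclotomic hp hq (by lia) (Int.natCast_dvd.2 hpΦ) (hdvd_n hq hqΦ)
  obtain rfl : q = p := le_antisymm (hle hp hq hpΦ hqΦ) (hle hq hp hqΦ hpΦ)
  refine sq_not_dvd_eval_cyclotomic (b := b) hp (hdvd_n hp hpΦ) hn ?_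
  exact_mod_cast Int.natCast_dvd.2 (sq q ▸ hk ▸ mul_dvd_mul_left q hqk)

end Zsigmondy

theorem IsComposite.of_dvd_of_lt {q x : ℤ} (hq : 1 < q) (hqx : q < x) (hdvd : q ∣ x) :
    IsComposite x := by
  refine ⟨hq.trans hqx, fun hx ↦ ?_⟩
  have hlt : q.natAbs < x.natAbs := by lia
  exact Nat.not_prime_of_dvd_of_lt (Int.natAbs_dvd_natAbs.2 hdvd) (by lia) hlt
    (Int.prime_iff_natAbs_prime.1 hx)

theorem IsBRiesel.of_forall_exists_dvd {b k : ℤ} (hb : 2 ≤ b) (hk : IsCoprime (k - 1) (b - 1))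
    (hdvd : ∀ n : ℕ, ∃ q : ℤ, 1 < q ∧ q < k ∧ q ∣ k * b ^ n - 1) : IsBRiesel b k := by
  obtain ⟨q₀, hq₀, hq₀k, -⟩ := hdvd 0
  refine ⟨by lia, Int.isCoprime_iff_gcd_eq_one.1 hk, fun n hn ↦ ?_⟩
  obtain ⟨q, hq, hqk, hqdvd⟩ := hdvd n
  have hbn : 2 ≤ b ^ n := hb.trans (le_self_pow₀ (by lia) hn.ne')
  exact .of_dvd_of_lt hq (by nlinarith) hqdvd

theorem infinite_setOf_forall_modEq {κ : Type*} [Finite κ] {q : κ → ℕ} (hq : ∀ k, q k ≠ 0)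
    (hcop : Pairwise (Nat.Coprime on q)) (a : κ → ℤ) :
    {t : ℕ | ∀ k, (t : ℤ) ≡ a k [ZMOD q k]}.Infinite := by
  have := Fintype.ofFinite κ
  have hQ : ∏ k, q k ≠ 0 := prod_ne_zero_iff.2 fun k _ ↦ hq k
  have := NeZero.mk hQ
  let x : ZMod (∏ k, q k) := (ZMod.prodEquivPi q hcop).symm fun k ↦ (a k : ZMod (q k))
  refine (Nat.frequently_atTop_iff_infinite.1 (Nat.frequently_modEq hQ x.val)).mono
    fun t ht k ↦ ?_
  have htx : (t : ZMod (∏ k, q k)) = x := by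
    rw [(ZMod.natCast_eq_natCast_iff _ _ _).2 ht, ZMod.natCast_zmod_val]
  rw [← ZMod.intCast_eq_intCast_iff, Int.cast_natCast]
  have hx := congrFun (congrArg (ZMod.prodEquivPi q hcop) htx) k
  rwa [map_natCast, RingEquiv.apply_symm_apply, Pi.natCast_apply] at hx

theorem dvd_cullen_mul_pow_sub_one {b p : ℤ} {m s t n : ℕ} (hbm : b ^ m ≡ 1 [ZMOD p])
    (ht : m ∣ t + 1) (htp : t ≡ b ^ (s + 1) - b [ZMOD p]) (hn : m ∣ n + s) :
    p ∣ (t * b ^ t + 1) * b ^ n - 1 := by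
  have hpow {e : ℕ} (he : m ∣ e) : b ^ e ≡ 1 [ZMOD p] := by
    obtain ⟨c, rfl⟩ := he
    simpa [pow_mul] using hbm.pow c
  have hcullen : (t : ℤ) * b ^ t + 1 ≡ b ^ s [ZMOD p] := calc
    (t : ℤ) * b ^ t + 1 ≡ (b ^ (s + 1) - b) * b ^ t + 1 [ZMOD p] := (htp.mul_right _).add_right 1
    _ = (b ^ s - 1) * b ^ (t + 1) + 1 := by ring
    _ ≡ (b ^ s - 1) * 1 + 1 [ZMOD p] := ((hpow ht).mul_left _).add_right 1
    _ = b ^ s := by ring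
  refine Int.ModEq.dvd (Int.ModEq.symm ?_)
  calc
    ((t : ℤ) * b ^ t + 1) * b ^ n ≡ b ^ s * b ^ n [ZMOD p] := hcullen.mul_right _
    _ = b ^ (n + s) := by ring
    _ ≡ 1 [ZMOD p] := hpow hn

/-- The residue classes `r i` modulo `m i` form a covering system: together they contain every
natural number. -/
def IsCoveringSystem {ι : Type*} (r m : ι → ℕ) : Prop :=
  ∀ n : ℕ, ∃ i, n ≡ r i [MOD m i]

theorem IsCoveringSystem.of_forall_lt {ι : Type*} {r m : ι → ℕ} {L : ℕ} (hL : 0 < L)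
    (hmL : ∀ i, m i ∣ L) (h : ∀ n < L, ∃ i, n ≡ r i [MOD m i]) : IsCoveringSystem r m := by
  intro n
  obtain ⟨i, hi⟩ := h (n % L) (Nat.mod_lt n hL)
  exact ⟨i, ((Nat.mod_modEq n L).of_dvd (hmL i)).symm.trans hi⟩

section Covering

variable {ι : Type*} {r m p : ι → ℕ}

theorem isBRiesel_cullen_of_isCoveringSystem {b : ℤ} {t : ℕ} (hb : 2 ≤ b)
    (hcov : IsCoveringSystem r m) (hm : ∀ i, m i ≠ 0) (hp : ∀ i, 1 < p i) (hpt : ∀ i, p i ≤ t)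
    (hbp : ∀ i, b ^ m i ≡ 1 [ZMOD p i]) (hbt : b - 1 ∣ t + 1) (hmt : ∀ i, m i ∣ t + 1)
    (htp : ∀ i, t ≡ b ^ ((m i - 1) * r i + 1) - b [ZMOD p i]) :
    IsBRiesel b (t * b ^ t + 1) := by
  refine .of_forall_exists_dvd hb ?_ fun n ↦ ?_
  · obtain ⟨c, hc⟩ := hbt
    have ht : IsCoprime (t : ℤ) (b - 1) := ⟨-1, c, by linarith⟩
    have hbpow : IsCoprime (b ^ t) (b - 1) := .pow_left ⟨1, -1, by ring⟩
    rw [add_sub_cancel_right]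
    exact ht.mul_left hbpow
  · obtain ⟨i, hi⟩ := hcov n
    -- `(m i - 1) * r i` is a natural number representing `-r i` modulo `m i`.
    have hmn : m i ∣ n + (m i - 1) * r i := by
      rw [← Nat.modEq_zero_iff_dvd]
      calc
        n + (m i - 1) * r i ≡ r i + (m i - 1) * r i [MOD m i] := hi.add_right _
        _ = m i * r i := by
          rw [← one_add_mul, Nat.add_sub_cancel' (Nat.one_le_iff_ne_zero.2 (hm i))]
        _ ≡ 0 [MOD m i] := Nat.modEq_zero_iff_dvd.2 (dvd_mul_right _ _)
    have hpt_lt : (p i : ℤ) < t * b ^ t + 1 := by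
      have : (t : ℤ) ≤ t * b ^ t := le_mul_of_one_le_right (by lia) (one_le_pow₀ (by lia))
      have := hpt i
      lia
    exact ⟨p i, by exact_mod_cast hp i, hpt_lt,
      dvd_cullen_mul_pow_sub_one (hbp i) (hmt i) (htp i) hmn⟩

theorem infinite_cullen_isBRiesel_of_isCoveringSystem [Finite ι] {b : ℕ} (hb : 2 ≤ b)
    (hcov : IsCoveringSystem r m) (hm : ∀ i, m i ≠ 0) (hp : ∀ i, 1 < p i)
    (hpp : Pairwise (Nat.Coprime on p)) (hpm : ∀ i j, (p i).Coprime (m j))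
    (hpb : ∀ i, (p i).Coprime (b - 1)) (hbp : ∀ i, b ^ m i ≡ 1 [MOD p i]) :
    {t : ℕ | 0 < t ∧ IsBRiesel b (t * (b : ℤ) ^ t + 1)}.Infinite := by
  have := Fintype.ofFinite ι
  let N := (b - 1) * ∏ i, m i
  let q : Option ι → ℕ := fun o ↦ o.elim N p
  let a : Option ι → ℤ := fun o ↦ o.elim (-1) fun i ↦ (b : ℤ) ^ ((m i - 1) * r i + 1) - b
  have hN : N ≠ 0 := mul_ne_zero (by lia) (prod_ne_zero_iff.2 fun i _ ↦ hm i)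
  have hq : ∀ o, q o ≠ 0 := Option.forall.2 ⟨hN, fun i ↦ (zero_lt_one.trans (hp i)).ne'⟩
  have hNp (i) : (p i).Coprime N := (hpb i).mul_right (.prod_right fun j _ ↦ hpm i j)
  have hqq : Pairwise (Nat.Coprime on q) := by
    rintro (_ | i) (_ | j) hij
    exacts [absurd rfl hij, (hNp j).symm, hNp i, hpp fun h ↦ hij (h ▸ rfl)]
  refine ((infinite_setOf_forall_modEq hq hqq a).sdiff (Set.finite_Iic (∏ i, p i))).mono ?_
  rintro t ⟨ht, htP⟩
  replace htP : ∏ i, p i < t := not_le.1 htP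
  have htN : N ∣ t + 1 := by
    have : (N : ℤ) ∣ t - -1 := (ht none).symm.dvd
    rw [sub_neg_eq_add] at this
    exact_mod_cast this
  have hpt (i) : p i ≤ t := (single_le_prod' (fun j _ ↦ (hp j).le) (mem_univ i)).trans htP.le
  refine ⟨by lia, isBRiesel_cullen_of_isCoveringSystem (by exact_mod_cast hb) hcov hm hp hpt
    (fun i ↦ by exact_mod_cast Int.natCast_modEq_iff.2 (hbp i)) ?_
    (fun i ↦ ((dvd_prod_of_mem m (mem_univ i)).mul_left _).trans htN) fun i ↦ ht (some i)⟩
  have hbt : b - 1 ∣ t + 1 := (dvd_mul_right _ _).trans htN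
  rw [← Nat.cast_pred (by lia)]
  exact_mod_cast hbt

theorem infinite_cullen_isBRiesel_of_injective_moduli [Finite ι] {b : ℕ} (hb : 2 < b)
    (hcov : IsCoveringSystem r m) (hm : Injective m) (hm_gt : ∀ i, 2 < m i)
    (hm_smooth : ∀ i, m i ∈ Nat.smoothNumbers 4) :
    {t : ℕ | 0 < t ∧ IsBRiesel b (t * (b : ℤ) ^ t + 1)}.Infinite := by
  choose p hp hord using fun i ↦ exists_prime_orderOf_eq hb (hm_gt i)
  have hm_lt (i) : m i < p i := by
    have := Fact.mk (hp i)
    have hb0 : (b : ZMod (p i)) ≠ 0 := by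
      intro hb0
      have := hm_gt i
      simp [← hord, hb0] at this
    exact Nat.lt_of_le_pred (hp i).pos
      (Nat.le_of_dvd (hp i).pred_pos (hord i ▸ ZMod.orderOf_dvd_card_sub_one hb0))
  have hp_inj : Injective p := fun i j hij ↦ hm (by rw [← hord i, ← hord j, hij])
  refine infinite_cullen_isBRiesel_of_isCoveringSystem (p := p) (by lia) hcov
    (fun i ↦ by have := hm_gt i; lia)
    (fun i ↦ (hp i).one_lt)
    (fun i j hij ↦ (Nat.coprime_primes (hp i) (hp j)).2 (hp_inj.ne hij)) ?_ ?_ ?_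
  · exact fun i j ↦ (hp i).smoothNumbers_coprime
      (Nat.smoothNumbers_mono (by have := hm_lt i; have := hm_gt i; lia) (hm_smooth j))
  · refine fun i ↦ (hp i).coprime_iff_not_dvd.2 fun hdvd ↦ ?_
    have hb1 : (b : ZMod (p i)) = 1 := by
      have := (ZMod.natCast_eq_zero_iff _ _).2 hdvd
      rwa [Nat.cast_sub (by lia), Nat.cast_one, sub_eq_zero] at this
    have := hm_gt i
    simp [← hord, hb1] at this
  · intro i
    rw [← ZMod.natCast_eq_natCast_iff]
    simpa [hord] using pow_orderOf_eq_one (b : ZMod (p i))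

end Covering

theorem isCoveringSystem_lcm_144 :
    IsCoveringSystem ![0, 0, 5, 2, 4, 7, 14, 7, 14, 1, 22, 55]
      ![3, 4, 6, 8, 9, 12, 16, 18, 24, 36, 48, 144] :=
  .of_forall_lt (L := 144) (by decide) (by decide) (by decide +kernel)

theorem isCoveringSystem_two_pow :
    IsCoveringSystem ![1, 2, 4, 8, 16, 32, 0] ![2, 4, 8, 16, 32, 64, 64] :=
  .of_forall_lt (L := 64) (by decide) (by decide) (by decide)

-- The orders of `2` modulo the Fermat primes `3, 5, 17, 257, 65537` are `2, 4, 8, 16, 32`; the last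
-- two primes divide `2 ^ 32 + 1 = 641 * 6700417`, so that `2` has order `64` modulo both.
theorem infinite_cullen_isBRiesel_two :
    {t : ℕ | 0 < t ∧ IsBRiesel 2 (t * 2 ^ t + 1)}.Infinite := by
  exact_mod_cast infinite_cullen_isBRiesel_of_isCoveringSystem (b := 2)
    (p := ![3, 5, 17, 257, 65537, 641, 6700417]) le_rfl isCoveringSystem_two_pow (by decide)
    (by decide) (by unfold Pairwise; decide) (by decide) (by decide) (by decide)

theorem infinite_cullen_isBRiesel_of_two_lt {b : ℕ} (hb : 2 < b) :
    {t : ℕ | 0 < t ∧ IsBRiesel b (t * (b : ℤ) ^ t + 1)}.Infinite := by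
  refine infinite_cullen_isBRiesel_of_injective_moduli hb isCoveringSystem_lcm_144 (by decide)
    (by decide) fun i ↦ ?_
  have h144 : 144 ∈ Nat.smoothNumbers 4 :=
    Nat.mem_smoothNumbers.2 ⟨by decide, by simp only [Nat.primeFactorsList_ofNat]; decide⟩
  refine Nat.mem_smoothNumbers_of_dvd h144 ?_
  decide +revert

theorem infinitely_many_cullen_b_riesel (b : ℤ) (hb : 2 ≤ b) :
    {t : ℕ | 0 < t ∧ IsBRiesel b ((t : ℤ) * b ^ t + 1)}.Infinite := by
  lift b to ℕ using by lia
  obtain rfl | hb' : b = 2 ∨ 2 < b := by lia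
  · exact_mod_cast infinite_cullen_isBRiesel_two
  · exact infinite_cullen_isBRiesel_of_two_lt hb'
end

section
/- Let b ≥ 3 be an integer such that b + 1 is not a power of 2, and let α be a nonzero integer. Then there exist infinitely many positive integers t such that t·b^t + α is a b-Brier number. -/
/-!
By Zsigmondy's theorem there is, for every `n > 1`, a prime modulo which `b` has order exactly `n`:
a prime factor of `Φ_n(b)` not dividing `n`. When `n > 2` one exists because the only prime that can
divide both `n` and `Φ_n(b)` is the largest prime factor `q` of `n`, it does so only to the first
power, and `Φ_n(b) > (b - 1) ^ φ(n) ≥ 2 ^ (q - 1) ≥ q`. When `n = 2`, an odd prime factor of `b + 1`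
is required.

Take distinct moduli `n i` and primes `p i` modulo which `b` has order `n i`. If `k = b ^ (-r i)`
modulo `p i`, then `p i` divides `k * b ^ m - 1` whenever `m ≡ r i` modulo `n i`, and, if `n i` is
even, it divides `k * b ^ m + 1` whenever `m ≡ r i - n i / 2`, because `b ^ (n i / 2) = -1`. So one
covering system serves both signs. A multiple `k` of `b - 1` also has `gcd (k ± 1, b - 1) = 1`.

It remains to prescribe `t * b ^ t` modulo each `p i`, and `t` modulo `b - 1`. The value of `b ^ t`
modulo `p` depends on `t` modulo `p - 1`, whose prime factors are smaller than `p`. Hence, treating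
the primes in increasing order, one can first freeze `t` modulo `p - 1` and then solve for `t`
modulo `p`.
-/

open Filter Polynomial

theorem isPrimitiveRoot_ordCompl_of_dvd_eval_cyclotomic {q n : ℕ} [Fact q.Prime] {b : ℤ}
    (hn : n ≠ 0) (h : (q : ℤ) ∣ (cyclotomic n ℤ).eval b) :
    IsPrimitiveRoot (b : ZMod q) (n / q ^ n.factorization q) := by
  have hq : q.Prime := Fact.out
  have : NeZero ((n / q ^ n.factorization q : ℕ) : ZMod q) :=
    ⟨by rw [Ne, ZMod.natCast_eq_zero_iff, ← hq.coprime_iff_not_dvd]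
        exact Nat.coprime_ordCompl hq hn⟩
  rw [← isRoot_cyclotomic_prime_pow_mul_iff_of_charP (p := q) (k := n.factorization q),
    Nat.ordProj_mul_ordCompl_eq_self, IsRoot.def, ← map_cyclotomic_int, eval_intCast_map,
    eq_intCast, ZMod.intCast_zmod_eq_zero_iff_dvd]
  exact h

theorem isPrimitiveRoot_of_dvd_eval_cyclotomic {q n : ℕ} [Fact q.Prime] {b : ℤ} (hqn : ¬ q ∣ n)
    (h : (q : ℤ) ∣ (cyclotomic n ℤ).eval b) : IsPrimitiveRoot (b : ZMod q) n := by
  have hn : n ≠ 0 := by rintro rfl; simp at hqn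
  simpa [Nat.factorization_eq_zero_of_not_dvd hqn] using
    isPrimitiveRoot_ordCompl_of_dvd_eval_cyclotomic hn h

theorem dvd_sub_one_of_isPrimitiveRoot_zmod {q m : ℕ} [Fact q.Prime] {x : ZMod q} (hm : m ≠ 0)
    (hx : IsPrimitiveRoot x m) : m ∣ q - 1 :=
  hx.eq_orderOf ▸ ZMod.orderOf_dvd_card_sub_one (hx.ne_zero hm)

theorem le_of_dvd_eval_cyclotomic {q r n : ℕ} (hq : q.Prime) (hr : r.Prime) {b : ℤ} (hn : n ≠ 0)
    (hrn : r ∣ n) (h : (q : ℤ) ∣ (cyclotomic n ℤ).eval b) : r ≤ q := by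
  have := Fact.mk hq
  rw [← Nat.ordProj_mul_ordCompl_eq_self n q] at hrn
  rcases hr.dvd_mul.1 hrn with hrq | hrm
  · exact ((Nat.prime_dvd_prime_iff_eq hr hq).1 (hr.dvd_of_dvd_pow hrq)).le
  · have hdvd := dvd_sub_one_of_isPrimitiveRoot_zmod (Nat.ordCompl_pos q hn).ne'
      (isPrimitiveRoot_ordCompl_of_dvd_eval_cyclotomic hn h)
    exact (Nat.le_of_dvd (Nat.sub_pos_of_lt hq.one_lt) (hrm.trans hdvd)).trans (Nat.sub_le q 1)

theorem not_sq_dvd_geom_sum {q : ℕ} (hq : 1 < q) (hodd : Odd q) {c : ℤ} (hc : (q : ℤ) ∣ c - 1) :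
    ¬ (q : ℤ) ^ 2 ∣ ∑ i ∈ Finset.range q, c ^ i := by
  obtain ⟨d, hd⟩ := hc
  obtain rfl : c = 1 + q * d := by linarith
  intro h
  have hsub : (q : ℤ) ^ 2 ∣ ∑ i ∈ Finset.range q, (1 + q * d) ^ i - q := by
    simpa using odd_sq_dvd_geom_sum₂_sub 1 d hodd
  have hqq : q ^ 2 ∣ q := by exact_mod_cast (dvd_sub_right h).1 hsub
  have := Nat.le_of_dvd (by omega) hqq
  nlinarith

theorem cyclotomic_dvd_geom_sum_X_pow_div (R : Type*) [CommRing R] {q n : ℕ} (hq : 1 < q)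
    (hqn : q ∣ n) (hn : n ≠ 0) :
    cyclotomic n R ∣ ∑ i ∈ Finset.range q, ((X : R[X]) ^ (n / q)) ^ i := by
  have hd : n / q ∈ n.properDivisors :=
    Nat.mem_properDivisors.2 ⟨Nat.div_dvd_of_dvd hqn, Nat.div_lt_self hn.bot_lt hq⟩
  have hmonic : ((X : R[X]) ^ (n / q) - 1).Monic := by
    simpa using monic_X_pow_sub_C (1 : R) (Nat.pos_of_mem_properDivisors hd).ne'
  obtain ⟨f, hf⟩ := X_pow_sub_one_mul_cyclotomic_dvd_X_pow_sub_one_of_dvd R hd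
  refine ⟨f, hmonic.isRegular.left ?_⟩
  beta_reduce
  rw [mul_geom_sum, ← pow_mul, Nat.div_mul_cancel hqn, hf, mul_assoc]

theorem eval_cyclotomic_dvd_geom_sum {q n : ℕ} (hq : 1 < q) (hqn : q ∣ n) (hn : n ≠ 0) (b : ℤ) :
    (cyclotomic n ℤ).eval b ∣ ∑ i ∈ Finset.range q, (b ^ (n / q)) ^ i := by
  simpa [eval_finsetSum] using
    eval_dvd (x := b) (cyclotomic_dvd_geom_sum_X_pow_div ℤ hq hqn hn)

theorem lt_eval_cyclotomic_of_dvd {q n : ℕ} (hq : q.Prime) (hqn : q ∣ n) (hn : n ≠ 0) {b : ℤ}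
    (hb : 3 ≤ b) : (q : ℤ) < (cyclotomic n ℤ).eval b := by
  have hφ : q - 1 ≤ n.totient := by
    rw [← Nat.totient_prime hq]
    exact Nat.le_of_dvd (Nat.totient_pos.2 hn.bot_lt) (Nat.totient_dvd_of_dvd hqn)
  have hq2 : q ≤ 2 ^ n.totient := by
    have := (Nat.lt_two_pow_self (n := q - 1)).trans_le (Nat.pow_le_pow_right two_pos hφ)
    omega
  have hb' : (3 : ℝ) ≤ b := by exact_mod_cast hb
  have hreal : (q : ℝ) < (cyclotomic n ℝ).eval (b : ℝ) :=
    calc (q : ℝ) ≤ 2 ^ n.totient := by exact_mod_cast hq2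
      _ ≤ ((b : ℝ) - 1) ^ n.totient := by gcongr; linarith
      _ < (cyclotomic n ℝ).eval (b : ℝ) :=
        sub_one_pow_totient_lt_cyclotomic_eval
          (hq.two_le.trans (Nat.le_of_dvd hn.bot_lt hqn)) (by linarith)
  rw [← map_cyclotomic_int, eval_intCast_map, eq_intCast] at hreal
  exact_mod_cast hreal

theorem not_four_dvd_eval_cyclotomic {n : ℕ} (hn : 2 < n) (b : ℤ) :
    ¬ (4 : ℤ) ∣ (cyclotomic n ℤ).eval b := by
  intro h4
  have h2 : ((2 : ℕ) : ℤ) ∣ (cyclotomic n ℤ).eval b := .trans (by norm_num) h4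
  obtain ⟨j, rfl⟩ : 4 ∣ n := by
    rcases Nat.eq_two_pow_or_exists_odd_prime_and_dvd n with ⟨k, rfl⟩ | ⟨p, hp, hpn, hodd⟩
    · exact pow_dvd_pow 2 ((Nat.pow_lt_pow_iff_right (n := 1) one_lt_two).1 hn)
    · obtain rfl : p = 2 :=
        (le_of_dvd_eval_cyclotomic Nat.prime_two hp (by omega) hpn h2).antisymm hp.two_le
      exact absurd hodd (by decide)
  have hsum := h4.trans
    (eval_cyclotomic_dvd_geom_sum one_lt_two (Dvd.intro_left (2 * j) (by ring)) (by omega) b)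
  have hsq : (4 : ℤ) ∣ (b ^ j) ^ 2 + 1 := by
    rw [geom_sum_two, show 4 * j / 2 = j * 2 by omega, pow_mul] at hsum
    exact hsum
  have hzmod : ((b ^ j : ℤ) : ZMod 4) ^ 2 + 1 = 0 := by
    exact_mod_cast (ZMod.intCast_zmod_eq_zero_iff_dvd _ 4).2 hsq
  exact (by decide : ∀ x : ZMod 4, x ^ 2 + 1 ≠ 0) _ hzmod

theorem not_sq_dvd_eval_cyclotomic_of_odd {q n : ℕ} (hq : q.Prime) (hodd : Odd q) (hqn : q ∣ n)
    (hn : n ≠ 0) (b : ℤ) : ¬ (q : ℤ) ^ 2 ∣ (cyclotomic n ℤ).eval b := by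
  have := Fact.mk hq
  intro hsq
  have hpow : (q : ℤ) ∣ b ^ n - 1 := by
    have hdvd := eval_dvd (x := b) (cyclotomic.dvd_X_pow_sub_one n ℤ)
    simp only [eval_sub, eval_pow, eval_X, eval_one] at hdvd
    exact (dvd_pow_self _ two_ne_zero).trans (hsq.trans hdvd)
  have hroot : (q : ℤ) ∣ b ^ (n / q) - 1 := by
    rw [← ZMod.intCast_zmod_eq_zero_iff_dvd] at hpow ⊢
    rwa [← Nat.div_mul_cancel hqn, pow_mul, Int.cast_sub, Int.cast_pow, ZMod.pow_card,
      ← Int.cast_sub] at hpow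
  exact not_sq_dvd_geom_sum hq.one_lt hodd hroot
    (hsq.trans (eval_cyclotomic_dvd_geom_sum hq.one_lt hqn hn b))

theorem not_sq_dvd_eval_cyclotomic {q n : ℕ} (hq : q.Prime) (hqn : q ∣ n) (hn : 2 < n) (b : ℤ) :
    ¬ (q : ℤ) ^ 2 ∣ (cyclotomic n ℤ).eval b := by
  rcases hq.eq_two_or_odd' with rfl | hodd
  · simpa using not_four_dvd_eval_cyclotomic hn b
  · exact not_sq_dvd_eval_cyclotomic_of_odd hq hodd hqn (by omega) b

theorem exists_natPrime_dvd {m : ℤ} (hm : 1 < m) : ∃ p : ℕ, p.Prime ∧ (p : ℤ) ∣ m := by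
  obtain ⟨p, hp, hpm⟩ := Nat.exists_prime_and_dvd (n := m.natAbs) (by omega)
  exact ⟨p, hp, Int.natCast_dvd.2 hpm⟩

theorem exists_prime_dvd_eval_cyclotomic_not_dvd {n : ℕ} (hn : 2 < n) {b : ℤ} (hb : 3 ≤ b) :
    ∃ p : ℕ, p.Prime ∧ (p : ℤ) ∣ (cyclotomic n ℤ).eval b ∧ ¬ p ∣ n := by
  by_contra! hall
  have hlt {q : ℕ} (hq : q.Prime) (hqn : q ∣ n) : (q : ℤ) < (cyclotomic n ℤ).eval b :=
    lt_eval_cyclotomic_of_dvd hq hqn (by omega) hb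
  have hone : 1 < (cyclotomic n ℤ).eval b := by
    have hmin := Nat.minFac_prime (by omega : n ≠ 1)
    exact lt_trans (by exact_mod_cast hmin.one_lt) (hlt hmin (Nat.minFac_dvd n))
  obtain ⟨q, hq, hqΦ⟩ := exists_natPrime_dvd hone
  have hqn := hall q hq hqΦ
  obtain ⟨m, hm⟩ := hqΦ
  have hm1 : 1 < m := by
    have := hlt hq hqn
    have : (0 : ℤ) < q := by exact_mod_cast hq.pos
    nlinarith
  obtain ⟨r, hr, hrm⟩ := exists_natPrime_dvd hm1
  have hrΦ : (r : ℤ) ∣ (cyclotomic n ℤ).eval b := hm ▸ hrm.mul_left _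
  obtain rfl : r = q := le_antisymm
    (le_of_dvd_eval_cyclotomic hq hr (by omega) (hall r hr hrΦ) (hm ▸ dvd_mul_right _ _))
    (le_of_dvd_eval_cyclotomic hr hq (by omega) hqn hrΦ)
  refine not_sq_dvd_eval_cyclotomic hq hqn hn b ?_
  rw [hm, sq]
  exact mul_dvd_mul_left _ hrm

theorem exists_prime_isPrimitiveRoot_of_two_lt {n : ℕ} (hn : 2 < n) {b : ℤ} (hb : 3 ≤ b) :
    ∃ p : ℕ, p.Prime ∧ IsPrimitiveRoot (b : ZMod p) n := by
  obtain ⟨p, hp, hpΦ, hpn⟩ := exists_prime_dvd_eval_cyclotomic_not_dvd hn hb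
  have := Fact.mk hp
  exact ⟨p, hp, isPrimitiveRoot_of_dvd_eval_cyclotomic hpn hpΦ⟩

theorem exists_prime_isPrimitiveRoot_two {b : ℤ} (hb : 0 ≤ b) (hb2 : ¬ ∃ n : ℕ, b + 1 = 2 ^ n) :
    ∃ p : ℕ, p.Prime ∧ IsPrimitiveRoot (b : ZMod p) 2 := by
  lift b to ℕ using hb
  rcases Nat.eq_two_pow_or_exists_odd_prime_and_dvd (b + 1) with ⟨k, hk⟩ | ⟨p, hp, hdvd, hodd⟩
  · exact absurd ⟨k, by exact_mod_cast hk⟩ hb2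
  · have := Fact.mk hp
    refine ⟨p, hp, ?_⟩
    have hneg : ((b : ℤ) : ZMod p) = -1 := by
      rw [eq_neg_iff_add_eq_zero]
      exact_mod_cast (ZMod.natCast_eq_zero_iff _ _).2 hdvd
    rw [hneg]
    exact IsPrimitiveRoot.neg_one p (by rintro rfl; exact absurd hodd (by decide))

theorem exists_prime_isPrimitiveRoot {n : ℕ} (hn : 1 < n) {b : ℤ} (hb : 3 ≤ b)
    (hb2 : ¬ ∃ k : ℕ, b + 1 = 2 ^ k) : ∃ p : ℕ, p.Prime ∧ IsPrimitiveRoot (b : ZMod p) n := by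
  rcases Nat.lt_or_eq_of_le hn with hn | rfl
  · exact exists_prime_isPrimitiveRoot_of_two_lt hn hb
  · exact exists_prime_isPrimitiveRoot_two (by omega) hb2

theorem exists_modEq_forall_mul_pow_eq {p M : ℕ} [Fact p.Prime] (hM : ¬ p ∣ M) (hpM : p - 1 ∣ M)
    {b : ℤ} (hb : (b : ZMod p) ≠ 0) (x : ℕ) (c : ZMod p) :
    ∃ y, y ≡ x [MOD M] ∧ ∀ t, t ≡ y [MOD M * p] → (t : ZMod p) * b ^ t = c := by
  have hcop : M.Coprime p := ((Fact.out : p.Prime).coprime_iff_not_dvd.2 hM).symm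
  obtain ⟨y, hyx, hyc⟩ := Nat.chineseRemainder hcop x (c * ((b : ZMod p) ^ x)⁻¹).val
  refine ⟨y, hyx, fun t ht => ?_⟩
  have htc : (t : ZMod p) = c * ((b : ZMod p) ^ x)⁻¹ := by
    rw [(ZMod.natCast_eq_natCast_iff _ _ _).2 ((ht.of_mul_left M).trans hyc), ZMod.natCast_zmod_val]
  have hpow : (b : ZMod p) ^ t = b ^ x :=
    pow_eq_pow_of_modEq (((ht.of_mul_right p).trans hyx).of_dvd hpM)
      (ZMod.pow_card_sub_one_eq_one hb)
  rw [htc, hpow, inv_mul_cancel_right₀ (pow_ne_zero x hb)]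

theorem exists_modEq_forall_mem_mul_pow_eq {ι : Type*} {p : ι → ℕ} (hp : ∀ i, (p i).Prime)
    (hinj : Function.Injective p) {b : ℤ} (hb : ∀ i, (b : ZMod (p i)) ≠ 0) {D : ℕ} [NeZero D]
    (hpD : ∀ i, ¬ p i ∣ D) (a : ZMod D) (c : ∀ i, ZMod (p i)) (s : Finset ι) :
    ∃ x M : ℕ, M ≠ 0 ∧ (∀ q, q.Prime → q ∣ M → q ∣ D ∨ ∃ i ∈ s, q ≤ p i) ∧
      ∀ t, t ≡ x [MOD M] → (t : ZMod D) = a ∧ ∀ i ∈ s, (t : ZMod (p i)) * b ^ t = c i := by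
  classical
  induction s using Finset.induction_on_max_value p with
  | empty =>
    refine ⟨a.val, D, NeZero.ne D, fun q _ hqD => .inl hqD, fun t ht => ⟨?_, by simp⟩⟩
    rw [(ZMod.natCast_eq_natCast_iff _ _ _).2 ht, ZMod.natCast_zmod_val]
  | insert i s his hmax ih =>
    obtain ⟨x, M, hM, hfactors, hx⟩ := ih
    have := Fact.mk (hp i)
    have hpi := (hp i).two_le
    have hpM : ¬ p i ∣ M * (p i - 1) := by
      intro hdvd
      rcases (hp i).dvd_mul.1 hdvd with hdvd | hdvd
      · rcases hfactors _ (hp i) hdvd with hdvd | ⟨j, hj, hle⟩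
        · exact hpD i hdvd
        · exact his (hinj (hle.antisymm (hmax j hj)) ▸ hj)
      · exact Nat.not_dvd_of_pos_of_lt (by omega) (by omega) hdvd
    obtain ⟨y, hyx, hy⟩ := exists_modEq_forall_mul_pow_eq hpM (dvd_mul_left _ _) (hb i) x (c i)
    refine ⟨y, M * (p i - 1) * p i, ?_, fun q hq hqM => ?_, fun t ht => ?_⟩
    · exact mul_ne_zero (mul_ne_zero hM (by omega)) (hp i).ne_zero
    · rcases hq.dvd_mul.1 hqM with hqM | hqp
      · rcases hq.dvd_mul.1 hqM with hqM | hqp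
        · exact (hfactors q hq hqM).imp_right fun ⟨j, hj, hle⟩ =>
            ⟨j, Finset.mem_insert_of_mem hj, hle⟩
        · exact .inr ⟨i, Finset.mem_insert_self i s,
            (Nat.le_of_dvd (by omega) hqp).trans (Nat.sub_le _ _)⟩
      · exact .inr ⟨i, Finset.mem_insert_self i s, Nat.le_of_dvd (by omega) hqp⟩
    · obtain ⟨hta, hts⟩ := hx t ((ht.of_mul_right (p i)).trans hyx |>.of_mul_right _)
      exact ⟨hta, (Finset.forall_mem_insert ..).2 ⟨hy t ht, hts⟩⟩

theorem isComposite_of_dvd {d m : ℤ} (hd : 1 < d) (hdm : d < m) (hdvd : d ∣ m) : IsComposite m := by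
  refine ⟨hd.trans hdm, fun hm => ?_⟩
  obtain ⟨e, rfl⟩ := hdvd
  rcases hm.irreducible.isUnit_or_isUnit rfl with h | h <;>
    rcases Int.isUnit_iff.1 h with rfl | rfl <;> omega

theorem isComposite_mul_pow_sub {p m : ℕ} (hp : p.Prime) (hm : m ≠ 0) {b k e : ℤ} (hb : 2 ≤ b)
    (hpk : p < k) (he : e ≤ 1) (hk : (k : ZMod p) * b ^ m = e) : IsComposite (k * b ^ m - e) := by
  have hp1 : (1 : ℤ) < p := by exact_mod_cast hp.one_lt
  refine isComposite_of_dvd hp1 ?_ ((ZMod.intCast_zmod_eq_zero_iff_dvd _ p).1 ?_)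
  · have hbm : b ≤ b ^ m := le_self_pow₀ (by omega) hm
    nlinarith
  · push_cast
    rw [hk, sub_self]

theorem sub_one_dvd_mul_pow_add {R : Type*} [CommRing R] {b x y : R} (h : b - 1 ∣ x + y) (n : ℕ) :
    b - 1 ∣ x * b ^ n + y := by
  rw [show x * b ^ n + y = x * (b ^ n - 1) + (x + y) by ring]
  exact ((sub_one_dvd_pow_sub_one b n).mul_left x).add h

theorem eventually_lt_mul_pow_add {b : ℤ} (hb : 1 ≤ b) (α C : ℤ) :
    ∀ᶠ t : ℕ in atTop, C < t * b ^ t + α := by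
  filter_upwards [tendsto_natCast_atTop_atTop.eventually_gt_atTop (C - α)] with t ht
  nlinarith [one_le_pow₀ hb (n := t)]

/-- A *Brier covering*: distinct moduli `n i > 1` and residues `r i` such that the classes of `r i`
modulo `n i` cover `ℕ`, and so do the classes of `r i - n i / 2` modulo the even `n i`. If `b` has
order `n i` and `k = b ^ (-r i)` modulo a prime `p i` for all `i`, the former detect a factor `p i`
of `k * b ^ m - 1` and the latter one of `k * b ^ m + 1`. -/
structure IsBrierCovering {ι : Type*} (n r : ι → ℕ) : Prop where
  injective : Function.Injective n
  one_lt : ∀ i, 1 < n i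
  exists_modEq : ∀ m, ∃ i, m ≡ r i [MOD n i]
  exists_add_half_modEq : ∀ m, ∃ i, Even (n i) ∧ m + n i / 2 ≡ r i [MOD n i]

/-- The moduli of a concrete Brier covering. The classes of `r i` already cover `ℕ` for the moduli
`2, 3, 6, 9, 12, 18, 36`, and those of `r i - n i / 2` for `2, 4, 6, 8, 16, 24, 48`. -/
def brierModulus : Fin 12 → ℕ := ![2, 3, 4, 6, 8, 9, 12, 16, 18, 24, 36, 48]

/-- The residues `r i` going with `brierModulus`. -/
def brierResidue : Fin 12 → ℕ := ![0, 1, 0, 3, 4, 8, 5, 12, 11, 16, 23, 20]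

set_option maxRecDepth 20000 in
theorem isBrierCovering_brierModulus : IsBrierCovering brierModulus brierResidue := by
  have hdvd : ∀ i, brierModulus i ∣ 144 := by decide
  have mod_modEq (m : ℕ) (i : Fin 12) : m ≡ m % 144 [MOD brierModulus i] :=
    (Nat.mod_modEq m 144).symm.of_dvd (hdvd i)
  refine ⟨by decide, by decide, fun m => ?_, fun m => ?_⟩
  · obtain ⟨i, hi⟩ := (by decide : ∀ m < 144, ∃ i, m ≡ brierResidue i [MOD brierModulus i])
      (m % 144) (Nat.mod_lt m (by norm_num))
    exact ⟨i, (mod_modEq m i).trans hi⟩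
  · obtain ⟨i, heven, hi⟩ := (by decide : ∀ m < 144, ∃ i, Even (brierModulus i) ∧
      m + brierModulus i / 2 ≡ brierResidue i [MOD brierModulus i])
      (m % 144) (Nat.mod_lt m (by norm_num))
    exact ⟨i, heven, ((mod_modEq m i).add_right _).trans hi⟩

namespace IsBrierCovering

variable {ι : Type*} {n r p : ι → ℕ} {b : ℤ}

theorem isBBrier (hcov : IsBrierCovering n r) (hp : ∀ i, (p i).Prime)
    (hroot : ∀ i, IsPrimitiveRoot (b : ZMod (p i)) (n i)) (hb : 2 ≤ b) {k : ℤ}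
    (hpk : ∀ i, p i < k) (hbk : b - 1 ∣ k) (hk : ∀ i, (k : ZMod (p i)) * b ^ r i = 1) :
    IsBBrier b k := by
  have hpos : 0 < k := by
    obtain ⟨i, -⟩ := hcov.exists_modEq 0
    exact (Int.natCast_nonneg _).trans_lt (hpk i)
  have hgcd (e : ℤ) (he : IsUnit e) : Int.gcd (k + e) (b - 1) = 1 := by
    rw [← Int.isCoprime_iff_gcd_eq_one]
    obtain ⟨c, rfl⟩ := hbk
    exact add_comm e _ ▸ (isCoprime_one_left.of_isCoprime_of_dvd_left he.dvd).add_mul_left_left c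
  refine ⟨⟨hpos, hgcd 1 isUnit_one, fun m hm => ?_⟩,
    ⟨hpos, hgcd (-1) isUnit_one.neg, fun m hm => ?_⟩⟩
  · obtain ⟨i, heven, hi⟩ := hcov.exists_add_half_modEq m
    have := Fact.mk (hp i)
    have hhalf : (b : ZMod (p i)) ^ (n i / 2) = -1 :=
      ((hroot i).pow (by have := hcov.one_lt i; omega)
        (Nat.div_mul_cancel heven.two_dvd).symm).eq_neg_one_of_two_right
    have hkm : (k : ZMod (p i)) * b ^ m = (-1 : ℤ) := by
      have := hk i
      rw [← pow_eq_pow_of_modEq hi (hroot i).pow_eq_one, pow_add, hhalf] at this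
      push_cast
      linear_combination -this
    simpa using isComposite_mul_pow_sub (hp i) hm.ne' hb (hpk i) (by norm_num) hkm
  · obtain ⟨i, hi⟩ := hcov.exists_modEq m
    have hkm : (k : ZMod (p i)) * b ^ m = (1 : ℤ) := by
      rw [pow_eq_pow_of_modEq hi (hroot i).pow_eq_one, hk i, Int.cast_one]
    exact isComposite_mul_pow_sub (hp i) hm.ne' hb (hpk i) le_rfl hkm

theorem exists_eventually_isBBrier [Finite ι] (hcov : IsBrierCovering n r)
    (hp : ∀ i, (p i).Prime) (hroot : ∀ i, IsPrimitiveRoot (b : ZMod (p i)) (n i)) (hb : 2 ≤ b)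
    (α : ℤ) :
    ∃ x M : ℕ, M ≠ 0 ∧ ∀ᶠ t : ℕ in atTop, t ≡ x [MOD M] → IsBBrier b (t * b ^ t + α) := by
  have := Fintype.ofFinite ι
  have (i : ι) := Fact.mk (hp i)
  have hb0 (i : ι) : (b : ZMod (p i)) ≠ 0 :=
    (hroot i).ne_zero (zero_lt_one.trans (hcov.one_lt i)).ne'
  have hinj : Function.Injective p := fun i j hij => hcov.injective <| by
    rw [(hroot i).eq_orderOf, (hroot j).eq_orderOf, hij]
  obtain ⟨D, hD⟩ := Int.eq_ofNat_of_zero_le (by omega : 0 ≤ b - 1)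
  have : NeZero D := ⟨by omega⟩
  have hpD (i : ι) : ¬ p i ∣ D := fun hdvd => (hroot i).ne_one (hcov.one_lt i) <| by
    rw [← sub_eq_zero, ← Int.cast_one, ← Int.cast_sub, hD, Int.cast_natCast]
    exact (ZMod.natCast_eq_zero_iff _ _).2 hdvd
  obtain ⟨x, M, hM, -, hx⟩ := exists_modEq_forall_mem_mul_pow_eq hp hinj hb0 hpD (-α : ZMod D)
    (fun i => ((b : ZMod (p i)) ^ r i)⁻¹ - α) Finset.univ
  refine ⟨x, M, hM, ?_⟩
  filter_upwards [eventually_all.2 fun i => eventually_lt_mul_pow_add (by omega : 1 ≤ b) α (p i)]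
    with t hlarge htx
  obtain ⟨htD, hk⟩ := hx t htx
  refine hcov.isBBrier hp hroot hb hlarge (sub_one_dvd_mul_pow_add ?_ t) fun i => ?_
  · rw [hD, ← ZMod.intCast_zmod_eq_zero_iff_dvd]
    push_cast
    rw [htD, neg_add_cancel]
  · push_cast
    rw [hk i (Finset.mem_univ i), sub_add_cancel, inv_mul_cancel₀ (pow_ne_zero _ (hb0 i))]

end IsBrierCovering

theorem infinitely_many_brier (b : ℤ) (hb : 3 ≤ b) (hb2 : ¬ ∃ n : ℕ, b + 1 = 2 ^ n)
    (α : ℤ) (hα : α ≠ 0) :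
    {t : ℕ | 0 < t ∧ IsBBrier b ((t : ℤ) * b ^ t + α)}.Infinite := by
  have hcov := isBrierCovering_brierModulus
  choose p hp hroot using fun i => exists_prime_isPrimitiveRoot (hcov.one_lt i) hb hb2
  obtain ⟨x, M, hM, hbrier⟩ :=
    hcov.exists_eventually_isBBrier hp hroot (by omega) α
  refine Nat.frequently_atTop_iff_infinite.1 <|
    ((Nat.frequently_modEq hM x).and_eventually (hbrier.and (eventually_gt_atTop 0))).mono ?_
  exact fun t ⟨htx, hbrier, hpos⟩ => ⟨hpos, hbrier htx⟩
end

section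
/- For any integer b ≥ 2 such that b + 1 is not a power of 2, there exist infinitely many positive integers t such that the b-Woodall number t·b^t − 1 is a b-Brier number. -/
/-!
If finitely many primes cover the sequences `k * b ^ n + 1` and `k * b ^ n - 1`, then they do so for
every `k'` congruent to `k` modulo each of them. Since `t * b ^ t - 1` is periodic in `t` modulo a
prime, one index `t` with a covered Woodall number yields a whole arithmetic progression of them.

To find one, take `t ≡ 1` modulo a common multiple `L` of the orders of `b` modulo the chosen
primes: then `b ^ t ≡ b`, and prescribing `t * b ^ t - 1` modulo these primes is a system of linear
congruences in `t`. For `b ≥ 3`, Zsigmondy's theorem and the hypothesis on `b + 1` provide primes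
modulo which `b` has order `m`, for the moduli `m` of a covering system of period `144`. As
`b ^ (m / 2) ≡ -1` for even `m`, the choice `k ≡ -b ^ (-r)` covers exponents `n ≡ r` of the first
sequence and `n ≡ r + m / 2` of the second. The only clash with `t ≡ 1` modulo `L` is the prime `3`
with `m = 2`, where `t ≡ 1` is what is needed. No prime gives `2` the order `6`, so base `2` uses a
known Brier number instead.
-/

section Covering

/-- The `b`-Woodall number with index `t`. -/
def woodall (b : ℤ) (t : ℕ) : ℤ := t * b ^ t - 1

/-- A finite set `S` of primes is a Brier covering for `k` in base `b` if every term of each of the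
sequences `k * b ^ n + 1` and `k * b ^ n - 1`, `n ≥ 1`, is divisible by a member of `S`. -/
structure IsBrierCovering_s14 (b k : ℤ) (S : Finset ℕ) : Prop where
  prime : ∀ p ∈ S, p.Prime
  exists_dvd_add_one : ∀ n, 0 < n → ∃ p ∈ S, (p : ℤ) ∣ k * b ^ n + 1
  exists_dvd_sub_one : ∀ n, 0 < n → ∃ p ∈ S, (p : ℤ) ∣ k * b ^ n - 1

variable {b k : ℤ} {S : Finset ℕ}

theorem pow_modEq_pow {p L r n : ℕ} (hb : b ^ L ≡ 1 [ZMOD p]) (h : n ≡ r [MOD L]) :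
    b ^ n ≡ b ^ r [ZMOD p] := by
  rw [← ZMod.intCast_eq_intCast_iff] at hb ⊢
  push_cast at hb ⊢
  exact pow_eq_pow_of_modEq h hb

theorem isComposite_of_prime_dvd {p : ℕ} {x : ℤ} (hp : p.Prime) (hdvd : (p : ℤ) ∣ x)
    (hlt : (p : ℤ) < x) : IsComposite x := by
  have hp1 : (1 : ℤ) < p := by exact_mod_cast hp.one_lt
  refine ⟨hp1.trans hlt, fun hx => ?_⟩
  have hassoc := (Nat.prime_iff_prime_int.1 hp).associated_of_dvd hx hdvd
  exact hlt.ne (Int.eq_of_associated_of_nonneg hassoc (by omega) (by omega))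

theorem dvd_mul_pow_add_of_modEq {p n : ℕ} {k' u : ℤ} (hp : p.Prime) (hn : 0 < n) (hu : IsUnit u)
    (hk : ¬ (p : ℤ) ∣ b → k ≡ k' [ZMOD p]) (hdvd : (p : ℤ) ∣ k * b ^ n + u) :
    (p : ℤ) ∣ k' * b ^ n + u := by
  have hpb : ¬ (p : ℤ) ∣ b := fun hpb => (Nat.prime_iff_prime_int.1 hp).not_isUnit <|
    isUnit_of_dvd_unit ((dvd_add_right (dvd_mul_of_dvd_right (dvd_pow hpb hn.ne') k)).1 hdvd) hu
  exact (((hk hpb).mul_right _).add_right u).dvd_iff.1 hdvd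

namespace IsBrierCovering_s14

theorem isBBrier_s14 (h : IsBrierCovering_s14 b k S) (hb : 2 ≤ b) (hk : ∀ p ∈ S, (p : ℤ) ≤ k)
    (hdvd : b - 1 ∣ k) : IsBBrier b k := by
  have hk2 : 2 ≤ k := by
    obtain ⟨p, hp, -⟩ := h.exists_dvd_add_one 1 one_pos
    exact le_trans (by exact_mod_cast (h.prime p hp).two_le) (hk p hp)
  have hgrow (n : ℕ) (hn : 0 < n) : k + 1 < k * b ^ n := by
    have : b ≤ b ^ n := le_self_pow₀ (by omega) hn.ne'
    nlinarith
  obtain ⟨c, rfl⟩ := hdvd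
  refine ⟨⟨by omega, ?_, fun n hn => ?_⟩, ⟨by omega, ?_, fun n hn => ?_⟩⟩
  · exact Int.isCoprime_iff_gcd_eq_one.1 ⟨1, -c, by ring⟩
  · obtain ⟨p, hp, hpdvd⟩ := h.exists_dvd_add_one n hn
    exact isComposite_of_prime_dvd (h.prime p hp) hpdvd (by linarith [hk p hp, hgrow n hn])
  · exact Int.isCoprime_iff_gcd_eq_one.1 ⟨-1, c, by ring⟩
  · obtain ⟨p, hp, hpdvd⟩ := h.exists_dvd_sub_one n hn
    exact isComposite_of_prime_dvd (h.prime p hp) hpdvd (by linarith [hk p hp, hgrow n hn])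

theorem congr {k' : ℤ} (h : IsBrierCovering_s14 b k S)
    (hk : ∀ p ∈ S, ¬ (p : ℤ) ∣ b → k ≡ k' [ZMOD p]) : IsBrierCovering_s14 b k' S where
  prime := h.prime
  exists_dvd_add_one n hn := (h.exists_dvd_add_one n hn).imp fun p ⟨hp, hdvd⟩ =>
    ⟨hp, dvd_mul_pow_add_of_modEq (h.prime p hp) hn isUnit_one (hk p hp) hdvd⟩
  exists_dvd_sub_one n hn := (h.exists_dvd_sub_one n hn).imp fun p ⟨hp, hdvd⟩ =>
    ⟨hp, dvd_mul_pow_add_of_modEq (h.prime p hp) hn isUnit_one.neg (hk p hp) hdvd⟩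

theorem of_forall_lt {L : ℕ} (hL : 0 < L) (hprime : ∀ p ∈ S, p.Prime)
    (hpow : ∀ p ∈ S, b ^ L ≡ 1 [ZMOD p]) (hadd : ∀ n < L, ∃ p ∈ S, (p : ℤ) ∣ k * b ^ n + 1)
    (hsub : ∀ n < L, ∃ p ∈ S, (p : ℤ) ∣ k * b ^ n - 1) : IsBrierCovering_s14 b k S := by
  have hmod {p : ℕ} (hp : p ∈ S) (n : ℕ) : k * b ^ (n % L) ≡ k * b ^ n [ZMOD p] :=
    (pow_modEq_pow (hpow p hp) (Nat.mod_modEq n L)).mul_left k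
  refine ⟨hprime, fun n _ => ?_, fun n _ => ?_⟩
  · exact (hadd (n % L) (Nat.mod_lt n hL)).imp fun p ⟨hp, hdvd⟩ =>
      ⟨hp, ((hmod hp n).add_right 1).dvd_iff.1 hdvd⟩
  · exact (hsub (n % L) (Nat.mod_lt n hL)).imp fun p ⟨hp, hdvd⟩ =>
      ⟨hp, ((hmod hp n).sub_right 1).dvd_iff.1 hdvd⟩

end IsBrierCovering_s14

theorem sub_one_dvd_woodall {t : ℕ} (ht : b - 1 ∣ t - 1) : b - 1 ∣ woodall b t := by
  have : woodall b t = (t - 1) * b ^ t + (b ^ t - 1) := by rw [woodall]; ring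
  rw [this]
  exact dvd_add (ht.mul_right _) (sub_one_dvd_pow_sub_one b t)

theorem woodall_modEq {p L s t : ℕ} (hb : b ^ L ≡ 1 [ZMOD p]) (hp : s ≡ t [MOD p])
    (hL : s ≡ t [MOD L]) : woodall b s ≡ woodall b t [ZMOD p] :=
  ((Int.natCast_modEq_iff.2 hp).mul (pow_modEq_pow hb hL)).sub_right 1

theorem woodall_modEq_mul_sub_one {p L t : ℕ} (hb : b ^ L ≡ 1 [ZMOD p]) (ht : t ≡ 1 [MOD L]) :
    woodall b t ≡ t * b - 1 [ZMOD p] :=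
  ((pow_one b ▸ pow_modEq_pow hb ht).mul_left _).sub_right 1

theorem le_woodall {t : ℕ} (hb : 1 ≤ b) : (t : ℤ) - 1 ≤ woodall b t := by
  have : (1 : ℤ) ≤ b ^ t := one_le_pow₀ hb
  rw [woodall]
  nlinarith

open Filter in
theorem IsBrierCovering_s14.infinite_setOf_isBBrier_woodall {t₀ : ℕ}
    (h : IsBrierCovering_s14 b (woodall b t₀) S) (hb : 2 ≤ b) (ht₀ : b - 1 ∣ t₀ - 1) :
    {t : ℕ | 0 < t ∧ IsBBrier b (woodall b t)}.Infinite := by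
  set Q := (b - 1).natAbs * ∏ p ∈ S, p * (p - 1)
  have hQ0 : Q ≠ 0 := by
    refine mul_ne_zero (by omega) (Finset.prod_ne_zero_iff.2 fun p hp => ?_)
    have := (h.prime p hp).one_lt
    exact mul_ne_zero (by omega) (by omega)
  refine Nat.frequently_atTop_iff_infinite.1 <|
    ((Nat.frequently_modEq hQ0 t₀).and_eventually (eventually_gt_atTop (S.sup id))).mono ?_
  rintro t ⟨hmod, hlt⟩
  have hcov : IsBrierCovering_s14 b (woodall b t) S := h.congr fun p hp hpb =>
    have hfermat : b ^ (p - 1) ≡ 1 [ZMOD p] := Int.ModEq.pow_card_sub_one_eq_one (h.prime p hp) <|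
      ((Nat.prime_iff_prime_int.1 (h.prime p hp)).coprime_iff_not_dvd.2 hpb).symm
    have hst : t₀ ≡ t [MOD p * (p - 1)] := hmod.symm.of_dvd <|
      (Finset.dvd_prod_of_mem (fun p => p * (p - 1)) hp).trans (dvd_mul_left _ _)
    woodall_modEq hfermat (hst.of_mul_right _) (hst.of_mul_left _)
  have ht : b - 1 ∣ t - 1 := by
    have : b - 1 ∣ (t₀ : ℤ) - t := Int.natAbs_dvd.1 (hmod.of_mul_right _).dvd
    simpa using dvd_sub ht₀ this
  refine ⟨by omega, hcov.isBBrier_s14 hb (fun p hp => ?_) (sub_one_dvd_woodall ht)⟩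
  have hp : p ≤ S.sup id := Finset.le_sup (f := id) hp
  exact le_trans (by omega) (le_woodall (by omega))

end Covering

section BaseTwo

/-- The smallest known Brier number, found by Clavier; `clavierPrimes` is a covering for it. -/
def clavierNumber : ℤ := 3316923598096294713661

/-- A Brier covering for `clavierNumber` in base `2`, with period `720`. -/
def clavierPrimes : Finset ℕ :=
  {3, 5, 7, 11, 13, 17, 19, 31, 37, 41, 73, 97, 109, 151, 241, 331, 673, 1321}

theorem prime_of_mem_clavierPrimes : ∀ p ∈ clavierPrimes, p.Prime := by
  simp only [clavierPrimes, Finset.forall_mem_insert, Finset.mem_singleton, forall_eq]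
  norm_num

theorem two_pow_modEq_one_of_mem_clavierPrimes : ∀ p ∈ clavierPrimes, 2 ^ 720 ≡ 1 [ZMOD p] := by
  decide +kernel

theorem isBrierCovering_clavierNumber : IsBrierCovering_s14 2 clavierNumber clavierPrimes := by
  refine .of_forall_lt (L := 720) (by norm_num) prime_of_mem_clavierPrimes
    two_pow_modEq_one_of_mem_clavierPrimes ?_ ?_ <;> decide +kernel

/-- The least positive solution of `t ≡ 1 [MOD 720]` and
`2 * t - 1 ≡ clavierNumber [ZMOD p]`, `p ∈ clavierPrimes`. -/
def clavierIndex : ℕ := 86714939012380290732187825551361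

theorem clavierNumber_modEq_two_mul_clavierIndex_sub_one :
    ∀ p ∈ clavierPrimes, clavierNumber ≡ clavierIndex * 2 - 1 [ZMOD p] := by
  decide +kernel

theorem clavierIndex_modEq_one : clavierIndex ≡ 1 [MOD 720] := by decide

theorem isBrierCovering_woodall_clavierIndex :
    IsBrierCovering_s14 2 (woodall 2 clavierIndex) clavierPrimes :=
  isBrierCovering_clavierNumber.congr fun p hp _ =>
    (clavierNumber_modEq_two_mul_clavierIndex_sub_one p hp).trans
      (woodall_modEq_mul_sub_one (two_pow_modEq_one_of_mem_clavierPrimes p hp)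
        clavierIndex_modEq_one).symm

end BaseTwo

section Zsigmondy

open Polynomial

theorem cyclotomic_mul_dvd_geom_sum (R : Type*) [CommRing R] [IsDomain R] {d n : ℕ} (hd : 0 < d)
    (hn : 1 < n) : cyclotomic (d * n) R ∣ ∑ i ∈ Finset.range n, (X ^ d) ^ i := by
  have h := X_pow_sub_one_mul_cyclotomic_dvd_X_pow_sub_one_of_dvd R
    (Nat.mem_properDivisors.2 ⟨dvd_mul_right d n, lt_mul_of_one_lt_right hd hn⟩)
  have hne : (X ^ d - 1 : R[X]) ≠ 0 := map_one (C (R := R)) ▸ X_pow_sub_C_ne_zero hd 1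
  rw [pow_mul, ← mul_geom_sum (X ^ d)] at h
  exact (mul_dvd_mul_iff_left hne).1 h

variable {p m : ℕ} [Fact p.Prime] {a : ℤ}

theorem orderOf_eq_ordCompl_of_dvd_cyclotomic_eval (hm : m ≠ 0)
    (h : (p : ℤ) ∣ (cyclotomic m ℤ).eval a) : orderOf (a : ZMod p) = ordCompl[p] m := by
  have hroot : (cyclotomic m (ZMod p)).IsRoot (a : ZMod p) := by
    rwa [← map_cyclotomic_int, IsRoot.def, eval_intCast_map, eq_intCast,
      ZMod.intCast_zmod_eq_zero_iff_dvd]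
  have : NeZero ((ordCompl[p] m : ℕ) : ZMod p) :=
    ⟨mt (ZMod.natCast_eq_zero_iff _ _).1 (Nat.not_dvd_ordCompl Fact.out hm)⟩
  rw [← Nat.ordProj_mul_ordCompl_eq_self m p, isRoot_cyclotomic_prime_pow_mul_iff_of_charP] at hroot
  exact hroot.eq_orderOf.symm

theorem prime_lt_of_dvd_cyclotomic_eval {q : ℕ} (hq : q.Prime) (hm : m ≠ 0) (hqm : q ∣ m)
    (hqp : q ≠ p) (h : (p : ℤ) ∣ (cyclotomic m ℤ).eval a) : q < p := by
  have hp : p.Prime := Fact.out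
  have horder := orderOf_eq_ordCompl_of_dvd_cyclotomic_eval hm h
  have ha : (a : ZMod p) ≠ 0 := by
    intro ha
    rw [ha, orderOf_zero] at horder
    exact (Nat.ordCompl_pos p hm).ne horder
  have hpq : ¬ p ∣ q := fun hpq => hqp ((Nat.prime_dvd_prime_iff_eq hp hq).1 hpq).symm
  have hdvd : q ∣ p - 1 :=
    (horder ▸ Nat.dvd_ordCompl_of_dvd_not_dvd hqm hpq).trans (ZMod.orderOf_dvd_card_sub_one ha)
  exact (Nat.le_of_dvd (Nat.sub_pos_of_lt hp.one_lt) hdvd).trans_lt (Nat.sub_lt hp.pos one_pos)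

theorem prime_eq_of_dvd_cyclotomic_eval {q : ℕ} [Fact q.Prime] (hm : m ≠ 0) (hpm : p ∣ m)
    (hqm : q ∣ m) (hp : (p : ℤ) ∣ (cyclotomic m ℤ).eval a)
    (hq : (q : ℤ) ∣ (cyclotomic m ℤ).eval a) : p = q := by
  by_contra hne
  exact lt_asymm (prime_lt_of_dvd_cyclotomic_eval Fact.out hm hpm hne hq)
    (prime_lt_of_dvd_cyclotomic_eval Fact.out hm hqm (Ne.symm hne) hp)

theorem four_dvd_of_two_dvd_cyclotomic_eval (hm : 2 < m) (h : (2 : ℤ) ∣ (cyclotomic m ℤ).eval a) :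
    4 ∣ m := by
  rcases Nat.eq_two_pow_or_exists_odd_prime_and_dvd m with ⟨k, rfl⟩ | ⟨q, hq, hqm, hodd⟩
  · exact pow_dvd_pow 2 ((Nat.pow_lt_pow_iff_right one_lt_two).1 (by simpa using hm) : 1 < k)
  · have hq2 : q ≠ 2 := by rintro rfl; exact absurd hodd (by decide)
    exact absurd (prime_lt_of_dvd_cyclotomic_eval hq (by omega) hqm hq2 h) hq.two_le.not_gt

theorem sq_not_dvd_geom_sum {x : ℤ} (hx : (p : ℤ) ∣ x - 1) (htwo : p = 2 → x % 4 = 1) :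
    ¬ (p : ℤ) ^ 2 ∣ ∑ i ∈ Finset.range p, x ^ i := by
  have hp : p.Prime := Fact.out
  rcases hp.eq_two_or_odd' with rfl | hodd
  · have := htwo rfl
    rw [geom_sum_two]
    omega
  · have hnot : ¬ (p : ℤ) ∣ x := fun h =>
      (Nat.prime_iff_prime_int.1 hp).not_dvd_one ((dvd_sub_right h).1 hx)
    have hone := emultiplicity_geom_sum₂_eq_one (Nat.prime_iff_prime_int.1 hp) hodd hx hnot
    simp only [one_pow, mul_one] at hone
    exact emultiplicity_lt_iff_not_dvd.1 (hone.trans_lt (by norm_num))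

theorem sq_not_dvd_cyclotomic_eval (hm : 2 < m) (hpm : p ∣ m) :
    ¬ (p : ℤ) ^ 2 ∣ (cyclotomic m ℤ).eval a := by
  intro h
  have hp : p.Prime := Fact.out
  have hdvd : (p : ℤ) ∣ (cyclotomic m ℤ).eval a := (dvd_pow_self _ two_ne_zero).trans h
  have hdiv : orderOf (a : ZMod p) ∣ m / p := by
    rw [orderOf_eq_ordCompl_of_dvd_cyclotomic_eval (by omega) hdvd,
      ← Nat.ordCompl_div_of_dvd hp hpm]
    exact Nat.ordCompl_dvd _ _
  have hmod : (p : ℤ) ∣ a ^ (m / p) - 1 := by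
    rw [← ZMod.intCast_zmod_eq_zero_iff_dvd]
    push_cast
    rw [orderOf_dvd_iff_pow_eq_one.1 hdiv, sub_self]
  have hsum : (p : ℤ) ^ 2 ∣ ∑ i ∈ Finset.range p, (a ^ (m / p)) ^ i := by
    have := eval_dvd (x := a) (cyclotomic_mul_dvd_geom_sum ℤ
      (Nat.div_pos (Nat.le_of_dvd (by omega) hpm) hp.pos) hp.one_lt)
    rw [Nat.div_mul_cancel hpm] at this
    simpa [eval_finsetSum] using h.trans this
  refine sq_not_dvd_geom_sum hmod ?_ hsum
  rintro rfl
  obtain ⟨n, rfl⟩ := four_dvd_of_two_dvd_cyclotomic_eval hm hdvd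
  rw [show 4 * n / 2 = n * 2 by omega, pow_mul] at hmod ⊢
  exact Int.sq_mod_four_eq_one_of_odd <| (Int.odd_pow' two_ne_zero).1 <| by
    rw [Int.odd_iff]
    omega

theorem prime_lt_natAbs_cyclotomic_eval {p m a : ℕ} (hp : p.Prime) (hm : 1 < m) (hpm : p ∣ m)
    (ha : 3 ≤ a) : p < ((cyclotomic m ℤ).eval (a : ℤ)).natAbs :=
  calc p = (p - 1) + 1 := (Nat.succ_pred_prime hp).symm
    _ ≤ 2 ^ (p - 1) := Nat.lt_two_pow_self
    _ = 2 ^ p.totient := by rw [Nat.totient_prime hp]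
    _ ≤ 2 ^ m.totient := Nat.pow_le_pow_right two_pos <|
        Nat.le_of_dvd (Nat.totient_pos.2 (by omega)) (Nat.totient_dvd_of_dvd hpm)
    _ ≤ (a - 1) ^ m.totient := Nat.pow_le_pow_left (by omega) _
    _ < _ := sub_one_pow_totient_lt_natAbs_cyclotomic_eval hm (by omega)

theorem exists_prime_dvd_cyclotomic_eval_not_dvd {a m : ℕ} (ha : 3 ≤ a) (hm : 3 ≤ m) :
    ∃ p : ℕ, p.Prime ∧ (p : ℤ) ∣ (cyclotomic m ℤ).eval (a : ℤ) ∧ ¬ p ∣ m := by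
  simp only [Int.natCast_dvd]
  set N := ((cyclotomic m ℤ).eval (a : ℤ)).natAbs
  by_contra! hall
  have hN1 : a - 1 < N := sub_one_lt_natAbs_cyclotomic_eval (by omega) (by omega)
  obtain ⟨p, hp, hpN⟩ := Nat.exists_prime_and_dvd (show N ≠ 1 by omega)
  have : Fact p.Prime := ⟨hp⟩
  have hpow : N = p ^ N.primeFactorsList.length :=
    Nat.eq_prime_pow_of_unique_prime_dvd (by omega) fun {q} hq hqN =>
      have : Fact q.Prime := ⟨hq⟩
      prime_eq_of_dvd_cyclotomic_eval (by omega) (hall q hq hqN) (hall p hp hpN)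
        (Int.natCast_dvd.2 hqN) (Int.natCast_dvd.2 hpN)
  have hsq : ¬ p ^ 2 ∣ N := by
    have := sq_not_dvd_cyclotomic_eval (a := a) hm (hall p hp hpN)
    rwa [← Nat.cast_pow, Int.natCast_dvd] at this
  have hlength : N.primeFactorsList.length ≤ 1 := by
    by_contra! h
    exact hsq (hpow ▸ pow_dvd_pow p h)
  have hle : N ≤ p := hpow.trans_le ((Nat.pow_le_pow_right hp.pos hlength).trans_eq (pow_one p))
  exact hle.not_gt (prime_lt_natAbs_cyclotomic_eval hp (by omega) (hall p hp hpN) ha)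

/-- Zsigmondy's theorem for `a ≥ 3`, which excludes its exception `2 ^ 6 - 1`. -/
theorem exists_prime_orderOf_eq_s14 {a m : ℕ} (ha : 3 ≤ a) (hm : 3 ≤ m) :
    ∃ p : ℕ, p.Prime ∧ orderOf (a : ZMod p) = m := by
  obtain ⟨p, hp, hdvd, hpm⟩ := exists_prime_dvd_cyclotomic_eval_not_dvd ha hm
  have : Fact p.Prime := ⟨hp⟩
  refine ⟨p, hp, ?_⟩
  have horder := orderOf_eq_ordCompl_of_dvd_cyclotomic_eval (by omega) hdvd
  rwa [Nat.factorization_eq_zero_of_not_dvd hpm, pow_zero, Nat.div_one, Int.cast_natCast] at horder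

theorem exists_prime_orderOf_eq_two {a : ℕ} (ha : ∀ n, a + 1 ≠ 2 ^ n) :
    ∃ p : ℕ, p.Prime ∧ orderOf (a : ZMod p) = 2 := by
  rcases Nat.eq_two_pow_or_exists_odd_prime_and_dvd (a + 1) with ⟨n, h⟩ | ⟨p, hp, hdvd, hodd⟩
  · exact absurd h (ha n)
  · have : Fact p.Prime := ⟨hp⟩
    have hneg : (a : ZMod p) = -1 := eq_neg_of_add_eq_zero_left <| by
      exact_mod_cast (ZMod.natCast_eq_zero_iff _ _).2 hdvd
    refine ⟨p, hp, ?_⟩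
    rw [hneg, orderOf_neg_one, ZMod.ringChar_zmod_n, if_neg]
    rintro rfl
    exact absurd hodd (by decide)

end Zsigmondy

section LargeBase

theorem pow_half_orderOf {R : Type*} [CommRing R] [IsDomain R] {x : R} (hpos : 0 < orderOf x)
    (heven : Even (orderOf x)) : x ^ (orderOf x / 2) = -1 :=
  ((IsPrimitiveRoot.orderOf x).pow hpos
    (Nat.div_mul_cancel heven.two_dvd).symm).eq_neg_one_of_two_right

theorem exists_modEq_and_forall_natCast_eq {ι : Type*} (S : Finset ι) {P : ι → ℕ}
    (hP0 : ∀ i ∈ S, P i ≠ 0) (hP : (S : Set ι).Pairwise (Function.onFun Nat.Coprime P)) {N : ℕ}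
    (hN : ∀ i ∈ S, N.Coprime (P i)) (a : ℕ) (x : ∀ i, ZMod (P i)) :
    ∃ t : ℕ, t ≡ a [MOD N] ∧ ∀ i ∈ S, (t : ZMod (P i)) = x i := by
  obtain ⟨s, hs⟩ := Nat.chineseRemainderOfFinset (fun i => (x i).val) P S hP0 hP
  obtain ⟨t, ht, hts⟩ := Nat.chineseRemainder (Nat.Coprime.prod_right hN) a s
  refine ⟨t, ht, fun i hi => ?_⟩
  have : NeZero (P i) := ⟨hP0 i hi⟩
  rw [(ZMod.natCast_eq_natCast_iff _ _ _).2 ((hts.of_dvd (Finset.dvd_prod_of_mem P hi)).trans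
    (hs i hi)), ZMod.natCast_zmod_val]

/-- A system of congruence classes `r m` modulo `m ∈ M` that covers the natural numbers and whose
classes with even modulus, each shifted by half its modulus, cover them again. -/
structure IsDoubleCovering (M : Finset ℕ) (r : ℕ → ℕ) : Prop where
  two_le : ∀ m ∈ M, 2 ≤ m
  exists_modEq : ∀ n, ∃ m ∈ M, n ≡ r m [MOD m]
  exists_modEq_add_half : ∀ n, ∃ m ∈ M, Even m ∧ n ≡ r m + m / 2 [MOD m]

variable {b : ℤ} {M : Finset ℕ} {r P : ℕ → ℕ}

theorem IsDoubleCovering.of_forall_lt {L : ℕ} (hL : 0 < L) (hdvd : ∀ m ∈ M, m ∣ L)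
    (two_le : ∀ m ∈ M, 2 ≤ m) (hcov : ∀ n < L, ∃ m ∈ M, n ≡ r m [MOD m])
    (hhalf : ∀ n < L, ∃ m ∈ M, Even m ∧ n ≡ r m + m / 2 [MOD m]) : IsDoubleCovering M r := by
  have hmod {m : ℕ} (hm : m ∈ M) (n : ℕ) : n ≡ n % L [MOD m] :=
    (Nat.mod_modEq n L).symm.of_dvd (hdvd m hm)
  refine ⟨two_le, fun n => ?_, fun n => ?_⟩
  · exact (hcov (n % L) (Nat.mod_lt n hL)).imp fun m ⟨hm, hn⟩ => ⟨hm, (hmod hm n).trans hn⟩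
  · exact (hhalf (n % L) (Nat.mod_lt n hL)).imp fun m ⟨hm, heven, hn⟩ =>
      ⟨hm, heven, (hmod hm n).trans hn⟩

theorem pow_modEq_one_of_orderOf_dvd {p L : ℕ} (h : orderOf (b : ZMod p) ∣ L) :
    b ^ L ≡ 1 [ZMOD p] := by
  rw [← ZMod.intCast_eq_intCast_iff]
  push_cast
  exact orderOf_dvd_iff_pow_eq_one.1 h

theorem IsDoubleCovering.isBrierCovering {k : ℤ} (h : IsDoubleCovering M r)
    (hprime : ∀ m ∈ M, (P m).Prime) (horder : ∀ m ∈ M, orderOf (b : ZMod (P m)) = m)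
    (hk : ∀ m ∈ M, (P m : ℤ) ∣ k * b ^ r m + 1) : IsBrierCovering_s14 b k (M.image P) := by
  have hperiod {m : ℕ} (hm : m ∈ M) : b ^ m ≡ 1 [ZMOD P m] :=
    pow_modEq_one_of_orderOf_dvd (horder m hm).dvd
  refine ⟨Finset.forall_mem_image.2 hprime, fun n _ => ?_, fun n _ => ?_⟩
  · obtain ⟨m, hm, hn⟩ := h.exists_modEq n
    exact ⟨P m, Finset.mem_image_of_mem P hm,
      (((pow_modEq_pow (hperiod hm) hn).mul_left k).add_right 1).dvd_iff.2 (hk m hm)⟩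
  · obtain ⟨m, hm, heven, hn⟩ := h.exists_modEq_add_half n
    have : Fact (P m).Prime := ⟨hprime m hm⟩
    have hhalf : b ^ (m / 2) ≡ -1 [ZMOD P m] := by
      rw [← ZMod.intCast_eq_intCast_iff]
      push_cast
      have hpos := two_pos.trans_le (h.two_le m hm)
      have := pow_half_orderOf (x := (b : ZMod (P m)))
      simp only [horder m hm] at this
      exact this hpos heven
    have hpow : k * b ^ n - 1 ≡ -(k * b ^ r m + 1) [ZMOD P m] :=
      calc k * b ^ n - 1
        _ ≡ k * b ^ (r m + m / 2) - 1 [ZMOD P m] :=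
          ((pow_modEq_pow (hperiod hm) hn).mul_left k).sub_right 1
        _ = k * b ^ r m * b ^ (m / 2) - 1 := by ring
        _ ≡ k * b ^ r m * -1 - 1 [ZMOD P m] := (hhalf.mul_left _).sub_right 1
        _ = -(k * b ^ r m + 1) := by ring
    exact ⟨P m, Finset.mem_image_of_mem P hm, hpow.dvd_iff.2 ((hk m hm).neg_right)⟩

theorem ne_zero_and_ne_one_of_two_le_orderOf {R : Type*} [MonoidWithZero R] [Nontrivial R] {x : R}
    (h : 2 ≤ orderOf x) : x ≠ 0 ∧ x ≠ 1 := by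
  refine ⟨?_, ?_⟩ <;> rintro rfl <;> simp at h

theorem mul_sub_one_mul_pow_add_one_eq_zero {K : Type*} [Field K] {x : K} (hx : x ≠ 0) (n : ℕ) :
    ((1 - (x ^ n)⁻¹) * x⁻¹ * x - 1) * x ^ n + 1 = 0 := by
  field_simp
  ring

theorem exists_modEq_one_and_dvd_mul_sub_one_mul_pow_add_one {L : ℕ}
    (hprime : ∀ m ∈ M, (P m).Prime) (htwo : ∀ m ∈ M, 2 ≤ m)
    (horder : ∀ m ∈ M, orderOf (b : ZMod (P m)) = m)
    (hcompat : ∀ m ∈ M, P m ∣ L → (P m : ℤ) ∣ (b - 1) * b ^ r m + 1) :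
    ∃ t : ℕ, t ≡ 1 [MOD L * (b - 1).natAbs] ∧
      ∀ m ∈ M, (P m : ℤ) ∣ (t * b - 1) * b ^ r m + 1 := by
  have hb (m : ℕ) (hm : m ∈ M) : (b : ZMod (P m)) ≠ 0 ∧ ¬ (P m : ℤ) ∣ b - 1 := by
    have : Fact (P m).Prime := ⟨hprime m hm⟩
    rw [← ZMod.intCast_zmod_eq_zero_iff_dvd, Int.cast_sub, Int.cast_one, sub_eq_zero]
    exact ne_zero_and_ne_one_of_two_le_orderOf ((htwo m hm).trans_eq (horder m hm).symm)
  have hcoprime : (M : Set ℕ).Pairwise (Function.onFun Nat.Coprime P) := fun m hm n hn hmn =>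
    (Nat.coprime_primes (hprime m hm) (hprime n hn)).2 fun hP =>
      hmn (by rw [← horder m hm, ← horder n hn, hP])
  obtain ⟨t, ht, htP⟩ := exists_modEq_and_forall_natCast_eq (M.filter fun m => ¬ P m ∣ L)
    (fun m hm => (hprime m (Finset.mem_of_mem_filter m hm)).ne_zero)
    (hcoprime.mono (Finset.coe_subset.2 (Finset.filter_subset _ M))) (N := L * (b - 1).natAbs)
    (fun m hm => by
      obtain ⟨hm, hmL⟩ := Finset.mem_filter.1 hm
      exact Nat.Coprime.mul_left ((hprime m hm).coprime_iff_not_dvd.2 hmL).symm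
        ((hprime m hm).coprime_iff_not_dvd.2 (mt Int.natCast_dvd.2 (hb m hm).2)).symm)
    1 (fun m => (1 - ((b : ZMod (P m)) ^ r m)⁻¹) * (b : ZMod (P m))⁻¹)
  refine ⟨t, ht, fun m hm => ?_⟩
  by_cases hmL : P m ∣ L
  · have ht1 : (t : ℤ) ≡ 1 [ZMOD P m] :=
      Int.natCast_modEq_iff.2 (ht.of_dvd (dvd_mul_of_dvd_left hmL _))
    have := (((ht1.mul_right b).sub_right 1).mul_right (b ^ r m)).add_right 1
    rw [one_mul] at this
    exact this.dvd_iff.2 (hcompat m hm hmL)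
  · have : Fact (P m).Prime := ⟨hprime m hm⟩
    rw [← ZMod.intCast_zmod_eq_zero_iff_dvd]
    push_cast
    rw [htP m (Finset.mem_filter.2 ⟨hm, hmL⟩)]
    exact mul_sub_one_mul_pow_add_one_eq_zero (hb m hm).1 (r m)

theorem IsDoubleCovering.exists_isBrierCovering_woodall {L : ℕ} (h : IsDoubleCovering M r)
    (hL : ∀ m ∈ M, m ∣ L) (hprime : ∀ m ∈ M, (P m).Prime)
    (horder : ∀ m ∈ M, orderOf (b : ZMod (P m)) = m)
    (hcompat : ∀ m ∈ M, P m ∣ L → (P m : ℤ) ∣ (b - 1) * b ^ r m + 1) :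
    ∃ t : ℕ, b - 1 ∣ t - 1 ∧ IsBrierCovering_s14 b (woodall b t) (M.image P) := by
  obtain ⟨t, ht, hdvd⟩ :=
    exists_modEq_one_and_dvd_mul_sub_one_mul_pow_add_one hprime h.two_le horder hcompat
  refine ⟨t, ?_, (h.isBrierCovering hprime horder hdvd).congr
    (Finset.forall_mem_image.2 fun m hm _ => (woodall_modEq_mul_sub_one ?_
      (ht.of_mul_right _)).symm)⟩
  · have : b - 1 ∣ ((1 : ℕ) : ℤ) - t := Int.natAbs_dvd.1 (ht.of_mul_left _).dvd
    exact dvd_sub_comm.1 this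
  · exact pow_modEq_one_of_orderOf_dvd ((horder m hm).dvd.trans (hL m hm))

/-- The moduli of a double covering of period `144`, to be used with `residue144`. -/
def moduli144 : Finset ℕ := {2, 3, 4, 6, 8, 9, 12, 16, 18, 24, 36, 72, 144}

/-- The residues of the double covering with moduli `moduli144`, with the junk value `0` off
`moduli144`. -/
def residue144 : ℕ → ℕ
  | 2 => 1 | 3 => 1 | 4 => 3 | 6 => 0 | 8 => 7 | 9 => 8 | 12 => 1 | 16 => 12
  | 18 => 2 | 24 => 11 | 36 => 14 | 72 => 32 | 144 => 68 | _ => 0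

theorem dvd_144_of_mem_moduli144 : ∀ m ∈ moduli144, m ∣ 144 := by decide

theorem isDoubleCovering_moduli144 : IsDoubleCovering moduli144 residue144 := by
  refine .of_forall_lt (L := 144) (by norm_num) dvd_144_of_mem_moduli144 ?_ ?_ ?_ <;>
    decide +kernel

theorem dvd_sub_one_mul_pow_residue144_orderOf_add_one {p : ℕ} (hp : p.Prime) (hdvd : p ∣ 144)
    (horder : 2 ≤ orderOf (b : ZMod p)) :
    (p : ℤ) ∣ (b - 1) * b ^ residue144 (orderOf (b : ZMod p)) + 1 := by
  have htwo : ∀ x : ZMod 2, x = 0 ∨ x = 1 := by decide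
  have hthree : ∀ x : ZMod 3, x = 0 ∨ x = 1 ∨ x = -1 := by decide
  have : Fact p.Prime := ⟨hp⟩
  obtain ⟨h0, h1⟩ := ne_zero_and_ne_one_of_two_le_orderOf horder
  have hp23 : p = 2 ∨ p = 3 :=
    ((hp.dvd_mul (m := 2 ^ 4) (n := 3 ^ 2)).1 hdvd).imp
      (fun h => (Nat.prime_dvd_prime_iff_eq hp Nat.prime_two).1 (hp.dvd_of_dvd_pow h))
      (fun h => (Nat.prime_dvd_prime_iff_eq hp Nat.prime_three).1 (hp.dvd_of_dvd_pow h))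
  rw [← ZMod.intCast_zmod_eq_zero_iff_dvd]
  push_cast
  generalize (b : ZMod p) = x at *
  rcases hp23 with rfl | rfl
  · exact absurd (htwo x) (not_or.2 ⟨h0, h1⟩)
  · obtain rfl := ((hthree x).resolve_left h0).resolve_left h1
    rw [orderOf_neg_one, ZMod.ringChar_zmod_n, if_neg (by norm_num)]
    rfl

theorem exists_isBrierCovering_woodall_of_three_le {a : ℕ} (ha : 3 ≤ a)
    (ha2 : ∀ n, a + 1 ≠ 2 ^ n) :
    ∃ (t : ℕ) (S : Finset ℕ), (a : ℤ) - 1 ∣ t - 1 ∧ IsBrierCovering_s14 a (woodall a t) S := by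
  have htwo (m : ℕ) (hm : m ∈ moduli144) : 2 ≤ m := isDoubleCovering_moduli144.two_le m hm
  have hexists (m : ℕ) (hm : m ∈ moduli144) :
      ∃ p : ℕ, p.Prime ∧ orderOf ((a : ℤ) : ZMod p) = m := by
    rcases (htwo m hm).eq_or_lt with rfl | hm3
    · exact_mod_cast exists_prime_orderOf_eq_two ha2
    · exact_mod_cast exists_prime_orderOf_eq_s14 ha hm3
  choose! P hprime horder using hexists
  obtain ⟨t, ht, hcov⟩ := isDoubleCovering_moduli144.exists_isBrierCovering_woodall
    dvd_144_of_mem_moduli144 hprime horder fun m hm hdvd => by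
      simpa only [horder m hm] using dvd_sub_one_mul_pow_residue144_orderOf_add_one (hprime m hm)
        hdvd ((htwo m hm).trans_eq (horder m hm).symm)
  exact ⟨t, _, ht, hcov⟩

end LargeBase

theorem infinitely_many_woodall_b_brier (b : ℤ) (hb : 2 ≤ b)
    (hb2 : ¬ ∃ n : ℕ, b + 1 = 2 ^ n) :
    {t : ℕ | 0 < t ∧ IsBBrier b ((t : ℤ) * b ^ t - 1)}.Infinite := by
  rcases hb.eq_or_lt with rfl | hb3
  · exact isBrierCovering_woodall_clavierIndex.infinite_setOf_isBBrier_woodall le_rfl (one_dvd _)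
  · lift b to ℕ using by omega
    obtain ⟨t, S, ht, hcov⟩ := exists_isBrierCovering_woodall_of_three_le (a := b)
      (by exact_mod_cast hb3) fun n hn => hb2 ⟨n, by exact_mod_cast hn⟩
    exact hcov.infinite_setOf_isBBrier_woodall hb ht
end
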